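/- There exist constants K > 0 and n₀ such that for every n = 2^k with n ≥ n₀ there exists a deterministic strategy for the non-local Hidden Matching game HM_nl(n) whose winning probability under the uniform input distribution is at least 1/2 + K·√((log n)/n). -/

import Mathlib

open scoped Classical
open Finset

/-- Inner product mod 2 on `{0,1}^k`, as a Boolean. -/
def bdot {k : ℕ} (a b : Fin k → Bool) : Bool :=
  decide ((Finset.univ.filter fun t => a t && b t).card % 2 = 1)

/-- Bitwise XOR on `{0,1}^k`. -/
def bxor {k : ℕ} (a b : Fin k → Bool) : Fin k → Bool := fun t => xor (a t) (b t)

/-- A perfect matching on `{0,1}^k`, represented as a fixed-point-free involution: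
the pair `(i, M i)` is matched for every `i`. -/
def MatchingV (k : ℕ) : Type :=
  {M : (Fin k → Bool) → (Fin k → Bool) // (∀ i, M (M i) = i) ∧ ∀ i, M i ≠ i}

noncomputable instance (k : ℕ) : Fintype (MatchingV k) :=
  Subtype.fintype _

/-!
Bob always announces the pair `(0, M 0)` and the bit `0`. The partner `M 0` is uniform on the
nonzero vectors `j`, so when Alice answers `a` the winning probability exceeds `1/2` by
`1 / (2 (n - 1))` times the correlation of the word `y j = x 0 ⊕ x j` with the codeword
`j ↦ a · j` of the simplex code. The word `y` is uniform, and Alice announces the codeword closest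
to it; it remains to see that the largest correlation is of order `√(n log n)` on average.

This holds for any large code whose codewords are pairwise nonpositively correlated, by a second
moment argument for the partition function `Z = 𝔼 a, exp (l * correlation (u a) y)`. Nonpositive
correlation makes the off-diagonal terms of `𝔼 Z²` at most `(𝔼 Z)²`, and `l ≈ √(log n / n)` is
small enough for the diagonal to be negligible too. By Paley–Zygmund `Z ≥ 𝔼 Z / 2` with
probability at least `1/8`, and then the largest correlation is at least `log (𝔼 Z / 2) / l`.
-/

open scoped BigOperators

section Expectation

lemma prod_expect {ι K : Type*} [Fintype ι] [DecidableEq ι] {κ : ι → Type*}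
    [∀ i, Fintype (κ i)] [Semifield K] [CharZero K] (f : ∀ i, κ i → K) :
    ∏ i, 𝔼 j, f i j = 𝔼 x : ∀ i, κ i, ∏ i, f i (x i) := by
  simp only [Fintype.expect_eq_sum_div_card, Finset.prod_div_distrib, Fintype.prod_sum,
    Fintype.card_pi, Nat.cast_prod]

lemma expect_bool {K : Type*} [Semifield K] [CharZero K] (f : Bool → K) :
    𝔼 b, f b = (f false + f true) / 2 := by
  rw [Fintype.expect_eq_sum_div_card, Fintype.sum_bool, Fintype.card_bool, add_comm, Nat.cast_ofNat]

lemma expect_comp_of_card_fiber_eq {Ω β K : Type*} [Fintype Ω] [Nonempty Ω] [Fintype β]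
    [DecidableEq β] [Semifield K] [CharZero K] {φ : Ω → β} {c : ℕ}
    (hφ : ∀ b, #{ω | φ ω = b} = c) (f : β → K) : 𝔼 ω, f (φ ω) = 𝔼 b, f b := by
  have hcard : Fintype.card Ω = Fintype.card β * c := by
    rw [← Finset.card_univ, Finset.card_eq_sum_card_fiberwise fun ω _ => Finset.mem_univ (φ ω)]
    simp [hφ]
  have hc : (c : K) ≠ 0 := by
    have := Fintype.card_ne_zero (α := Ω)
    exact_mod_cast right_ne_zero_of_mul (hcard ▸ this)
  have hsum : ∑ ω, f (φ ω) = (∑ b, f b) * c := by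
    rw [← Fintype.sum_fiberwise' φ f, Finset.sum_mul]
    simp [hφ, Fintype.card_subtype, mul_comm]
  rw [Fintype.expect_eq_sum_div_card, Fintype.expect_eq_sum_div_card, hsum, hcard, Nat.cast_mul,
    mul_div_mul_right _ _ hc]

lemma paley_zygmund {Ω : Type*} [Fintype Ω] [Nonempty Ω] (W : Ω → ℝ)
    {θ : ℝ} (hθ₀ : 0 ≤ θ) (hθ₁ : θ ≤ 1) (hW : 0 ≤ 𝔼 ω, W ω) :
    (1 - θ) ^ 2 * (𝔼 ω, W ω) ^ 2 ≤
      (𝔼 ω, W ω ^ 2) * 𝔼 ω, if θ * 𝔼 ω', W ω' ≤ W ω then (1 : ℝ) else 0 := by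
  set μ := 𝔼 ω, W ω
  let p : Ω → ℝ := fun ω => if θ * μ ≤ W ω then 1 else 0
  have hpsq : ∀ ω, p ω ^ 2 = p ω := fun ω => by simp [p]
  have htrunc : (1 - θ) * μ ≤ 𝔼 ω, W ω * p ω := by
    have hpt : ∀ ω, W ω ≤ θ * μ + W ω * p ω := by
      intro ω
      by_cases h : θ * μ ≤ W ω
      · simpa [p, h] using mul_nonneg hθ₀ hW
      · simpa [p, h] using (not_le.1 h).le
    have := Finset.expect_le_expect (s := Finset.univ) fun ω _ => hpt ω
    rw [Finset.expect_add_distrib, Fintype.expect_const] at this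
    linarith
  calc (1 - θ) ^ 2 * μ ^ 2 = ((1 - θ) * μ) ^ 2 := by ring
    _ ≤ (𝔼 ω, W ω * p ω) ^ 2 :=
      pow_le_pow_left₀ (mul_nonneg (sub_nonneg.2 hθ₁) hW) htrunc 2
    _ ≤ (𝔼 ω, W ω ^ 2) * 𝔼 ω, p ω ^ 2 := Finset.expect_mul_sq_le_sq_mul_sq _ _ _
    _ = (𝔼 ω, W ω ^ 2) * 𝔼 ω, p ω := by simp only [hpsq]

end Expectation

section Cosh

lemma one_add_sq_div_two_le_cosh (x : ℝ) : 1 + x ^ 2 / 2 ≤ Real.cosh x := by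
  have hsinh : (x / 2) ^ 2 ≤ Real.sinh (x / 2) ^ 2 := by
    rw [sq_le_sq, Real.abs_sinh]
    exact Real.self_le_sinh_iff.2 (abs_nonneg _)
  have hdouble := Real.cosh_two_mul (x / 2)
  rw [Real.cosh_sq, mul_div_cancel₀ x two_ne_zero] at hdouble
  linarith

lemma sq_div_three_le_log_cosh {x : ℝ} (hx : x ^ 2 ≤ 1) :
    x ^ 2 / 3 ≤ Real.log (Real.cosh x) := by
  calc x ^ 2 / 3 ≤ 2 * (x ^ 2 / 2) / (x ^ 2 / 2 + 2) := by
        rw [le_div_iff₀ (by positivity)]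
        nlinarith [sq_nonneg x]
    _ ≤ Real.log (1 + x ^ 2 / 2) := Real.le_log_one_add_of_nonneg (by positivity)
    _ ≤ Real.log (Real.cosh x) :=
        Real.log_le_log (by positivity) (one_add_sq_div_two_le_cosh x)

lemma cosh_two_mul_le_cosh_pow_four (x : ℝ) : Real.cosh (2 * x) ≤ Real.cosh x ^ 4 := by
  rw [Real.cosh_two_mul, Real.sinh_sq]
  nlinarith [sq_nonneg (Real.cosh x ^ 2 - 1)]

end Cosh

section Correlation

/-- The sign `(-1) ^ b` of a bit. -/
def boolSign (b : Bool) : ℝ := if b then -1 else 1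

lemma boolSign_false : boolSign false = 1 := by
  simp [boolSign]

lemma boolSign_mul_self (a : Bool) : boolSign a * boolSign a = 1 := by
  cases a <;> simp [boolSign]

lemma ite_eq_one_zero_eq_boolSign (a b : Bool) :
    (if a = b then (1 : ℝ) else 0) = (1 + boolSign a * boolSign b) / 2 := by
  cases a <;> cases b <;> norm_num [boolSign]

lemma cosh_mul_boolSign_add_le (l : ℝ) (a b : Bool) :
    Real.cosh (l * (boolSign a + boolSign b)) ≤
      Real.cosh l ^ (2 * (1 + boolSign a * boolSign b)) := by
  have hagree : Real.cosh (l * 2) ≤ Real.cosh l ^ (4 : ℝ) := by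
    rw [mul_comm]
    exact_mod_cast cosh_two_mul_le_cosh_pow_four l
  cases a <;> cases b
  · convert hagree using 2 <;> norm_num [boolSign]
  · simp [boolSign]
  · simp [boolSign]
  · rw [← Real.cosh_neg]
    convert hagree using 2 <;> norm_num [boolSign]

variable {ι : Type*} [Fintype ι]

/-- The correlation of two words over `{0,1}`: agreements minus disagreements. -/
def correlation (u v : ι → Bool) : ℝ := ∑ j, boolSign (u j) * boolSign (v j)

lemma correlation_self (u : ι → Bool) : correlation u u = Fintype.card ι := by
  simp [correlation, boolSign_mul_self]

lemma correlation_le_iSup {α : Type*} [Finite α] (u : α → ι → Bool) (y : ι → Bool)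
    (a : α) : correlation (u a) y ≤ ⨆ a, correlation (u a) y :=
  le_ciSup (f := fun a => correlation (u a) y) (Set.finite_range _).bddAbove a

variable [DecidableEq ι]

lemma expect_exp_sum_mul_boolSign (c : ι → ℝ) :
    𝔼 y : ι → Bool, Real.exp (∑ j, c j * boolSign (y j)) = ∏ j, Real.cosh (c j) := by
  simp only [Real.exp_sum]
  rw [← prod_expect fun j b => Real.exp (c j * boolSign b)]
  refine Finset.prod_congr rfl fun j _ => ?_
  rw [expect_bool, Real.cosh_eq]
  simp [boolSign]

lemma expect_exp_mul_correlation (l : ℝ) (u : ι → Bool) :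
    𝔼 y, Real.exp (l * correlation u y) = Real.cosh l ^ Fintype.card ι := by
  have hcosh : ∀ b, Real.cosh (l * boolSign b) = Real.cosh l := by
    intro b
    cases b <;> simp [boolSign]
  simp only [correlation, Finset.mul_sum, ← mul_assoc]
  simp [expect_exp_sum_mul_boolSign, hcosh]

lemma expect_exp_mul_correlation_mul_le (l : ℝ) (u v : ι → Bool) :
    𝔼 y, Real.exp (l * correlation u y) * Real.exp (l * correlation v y) ≤
      Real.cosh l ^ (2 * (Fintype.card ι + correlation u v)) := by
  calc 𝔼 y, Real.exp (l * correlation u y) * Real.exp (l * correlation v y)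
      = ∏ j, Real.cosh (l * (boolSign (u j) + boolSign (v j))) := by
        rw [← expect_exp_sum_mul_boolSign]
        simp only [← Real.exp_add, correlation, Finset.mul_sum, ← Finset.sum_add_distrib]
        simp only [mul_add, add_mul, mul_assoc]
    _ ≤ ∏ j, Real.cosh l ^ (2 * (1 + boolSign (u j) * boolSign (v j))) :=
        Finset.prod_le_prod (fun _ _ => (Real.cosh_pos _).le)
          fun _ _ => cosh_mul_boolSign_add_le _ _ _
    _ = Real.cosh l ^ (2 * (Fintype.card ι + correlation u v)) := by
        rw [← Real.rpow_sum_of_pos (Real.cosh_pos l), ← Finset.mul_sum, Finset.sum_add_distrib]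
        simp [correlation]

end Correlation

section PartitionFunction

variable {α ι : Type*} [Fintype α] [Fintype ι]

/-- The normalized partition function, at inverse temperature `l`, of the correlations of the word
`y` with the codewords `u a`; up to the factor `l`, its logarithm is a lower bound for the largest
of these correlations. -/
noncomputable def partitionFunction (u : α → ι → Bool) (l : ℝ) (y : ι → Bool) : ℝ :=
  𝔼 a, Real.exp (l * correlation (u a) y)

variable [Nonempty α]

lemma partitionFunction_le_exp_mul_iSup (u : α → ι → Bool) {l : ℝ} (hl : 0 ≤ l) (y : ι → Bool) :
    partitionFunction u l y ≤ Real.exp (l * ⨆ a, correlation (u a) y) :=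
  Finset.expect_le Finset.univ_nonempty fun a _ =>
    Real.exp_le_exp.2 <| mul_le_mul_of_nonneg_left (correlation_le_iSup u y a) hl

lemma iSup_correlation_nonneg {u : α → ι → Bool} (hu : ∀ j, 𝔼 a, boolSign (u a j) = 0)
    (y : ι → Bool) : 0 ≤ ⨆ a, correlation (u a) y := by
  have hmean : 𝔼 a, correlation (u a) y = 0 := by
    simp only [correlation]
    rw [Finset.expect_sum_comm]
    simp [← Finset.expect_mul, hu]
  rw [← hmean]
  exact Finset.expect_le Finset.univ_nonempty fun a _ => correlation_le_iSup u y a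

variable [DecidableEq ι]

lemma expect_partitionFunction (u : α → ι → Bool) (l : ℝ) :
    𝔼 y, partitionFunction u l y = Real.cosh l ^ Fintype.card ι := by
  simp only [partitionFunction]
  rw [Finset.expect_comm]
  simp [expect_exp_mul_correlation]

lemma expect_partitionFunction_sq_le {u : α → ι → Bool}
    (hu : Pairwise fun a b => correlation (u a) (u b) ≤ 0) (l : ℝ) :
    𝔼 y, partitionFunction u l y ^ 2 ≤
      (Real.cosh l ^ Fintype.card ι) ^ 2 +
        (Real.cosh l ^ Fintype.card ι) ^ 4 / Fintype.card α := by
  set C := Real.cosh l ^ Fintype.card ι with hC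
  have hpair : ∀ a b,
      𝔼 y, Real.exp (l * correlation (u a) y) * Real.exp (l * correlation (u b) y) ≤
        C ^ 2 + if a = b then C ^ 4 else 0 := by
    intro a b
    refine (expect_exp_mul_correlation_mul_le l (u a) (u b)).trans ?_
    rw [hC, ← pow_mul, ← pow_mul]
    split_ifs with hab
    · subst hab
      refine le_add_of_nonneg_of_le (by positivity) (le_of_eq ?_)
      rw [correlation_self, ← Real.rpow_natCast]
      congr 1
      push_cast
      ring
    · rw [add_zero, ← Real.rpow_natCast]
      refine Real.rpow_le_rpow_of_exponent_le (Real.one_le_cosh l) ?_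
      push_cast
      linarith [hu hab]
  calc 𝔼 y, partitionFunction u l y ^ 2
      = 𝔼 a, 𝔼 b, 𝔼 y,
          Real.exp (l * correlation (u a) y) * Real.exp (l * correlation (u b) y) := by
        simp only [partitionFunction, sq, Fintype.expect_mul_expect]
        rw [Finset.expect_comm]
        exact Finset.expect_congr rfl fun a _ => Finset.expect_comm _ _ _
    _ ≤ 𝔼 a, 𝔼 b, (C ^ 2 + if a = b then C ^ 4 else 0) :=
        Finset.expect_le_expect fun a _ => Finset.expect_le_expect fun b _ => hpair a b
    _ = C ^ 2 + C ^ 4 / Fintype.card α := by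
        simp [Finset.expect_add_distrib, NNRat.smul_def, inv_mul_eq_div]

lemma one_div_eight_le_expect_partitionFunction_ge {u : α → ι → Bool}
    (hu : Pairwise fun a b => correlation (u a) (u b) ≤ 0) {l : ℝ}
    (hl : (Real.cosh l ^ Fintype.card ι) ^ 2 ≤ Fintype.card α) :
    1 / 8 ≤ 𝔼 y, if Real.cosh l ^ Fintype.card ι / 2 ≤ partitionFunction u l y
      then (1 : ℝ) else 0 := by
  set C := Real.cosh l ^ Fintype.card ι with hC
  have hCpos : 0 < C := pow_pos (Real.cosh_pos l) _
  have hsecond : 𝔼 y, partitionFunction u l y ^ 2 ≤ 2 * C ^ 2 := by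
    have hdiag : C ^ 4 / Fintype.card α ≤ C ^ 2 := by
      rw [div_le_iff₀ (by exact_mod_cast Fintype.card_pos)]
      nlinarith [sq_nonneg C]
    linarith [expect_partitionFunction_sq_le hu l]
  have hPZ := paley_zygmund (partitionFunction u l) (θ := 1 / 2)
    (by norm_num) (by norm_num) (by rw [expect_partitionFunction]; positivity)
  rw [expect_partitionFunction, ← hC, one_div_mul_eq_div] at hPZ
  set P := 𝔼 y, if C / 2 ≤ partitionFunction u l y then (1 : ℝ) else 0
  have hP : 0 ≤ P := Finset.expect_nonneg fun y _ => by split_ifs <;> norm_num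
  have : C ^ 2 * (1 / 8) ≤ C ^ 2 * P := by
    nlinarith [mul_le_mul_of_nonneg_right hsecond hP]
  exact le_of_mul_le_mul_left this (pow_pos hCpos 2)

lemma log_cosh_le_mul_expect_iSup_correlation {u : α → ι → Bool}
    (hbal : ∀ j, 𝔼 a, boolSign (u a j) = 0)
    (hcorr : Pairwise fun a b => correlation (u a) (u b) ≤ 0) {l : ℝ} (hl : 0 ≤ l)
    (hlα : (Real.cosh l ^ Fintype.card ι) ^ 2 ≤ Fintype.card α) :
    (Fintype.card ι * Real.log (Real.cosh l) - Real.log 2) / 8 ≤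
      l * 𝔼 y, ⨆ a, correlation (u a) y := by
  set C := Real.cosh l ^ Fintype.card ι with hC
  have hCpos : 0 < C := pow_pos (Real.cosh_pos l) _
  have hsup : ∀ y, 0 ≤ l * ⨆ a, correlation (u a) y := fun y =>
    mul_nonneg hl (iSup_correlation_nonneg hbal y)
  rw [← Real.log_pow, ← hC, ← Real.log_div hCpos.ne' two_ne_zero, Finset.mul_expect]
  set D := Real.log (C / 2)
  rcases le_total D 0 with hD | hD
  · exact (div_nonpos_of_nonpos_of_nonneg hD (by norm_num)).trans
      (Finset.expect_nonneg fun y _ => hsup y)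
  calc D / 8 = D * (1 / 8) := by ring
    _ ≤ D * 𝔼 y, if C / 2 ≤ partitionFunction u l y then (1 : ℝ) else 0 := by
      gcongr
      exact one_div_eight_le_expect_partitionFunction_ge hcorr hlα
    _ ≤ 𝔼 y, l * ⨆ a, correlation (u a) y := by
      rw [Finset.mul_expect]
      refine Finset.expect_le_expect fun y _ => ?_
      split_ifs with hy
      · rw [mul_one, Real.log_le_iff_le_exp (by positivity)]
        exact hy.trans (partitionFunction_le_exp_mul_iSup u hl y)
      · rw [mul_zero]
        exact hsup y

end PartitionFunction

theorem sqrt_card_mul_log_card_le_expect_iSup_correlation {α ι : Type*} [Fintype α] [Fintype ι]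
    [DecidableEq ι] {u : α → ι → Bool}
    (hbal : ∀ j, 𝔼 a, boolSign (u a j) = 0)
    (hcorr : Pairwise fun a b => correlation (u a) (u b) ≤ 0)
    (hα : 64 ≤ Fintype.card α) (hαι : Real.log (Fintype.card α) ≤ Fintype.card ι) :
    √(Fintype.card ι * Real.log (Fintype.card α)) / 48 ≤ 𝔼 y, ⨆ a, correlation (u a) y := by
  set m : ℝ := (Fintype.card ι : ℝ) with hm
  have : Nonempty α := Fintype.card_pos_iff.1 (by lia)
  have hn64 : (64 : ℝ) ≤ Fintype.card α := by exact_mod_cast hα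
  set n : ℝ := (Fintype.card α : ℝ)
  have hlog2 : 6 * Real.log 2 ≤ Real.log n := by
    rw [← Nat.cast_ofNat, ← Real.log_pow]
    exact Real.log_le_log (by norm_num) (by norm_num; exact hn64)
  have hlogn : 0 < Real.log n := Real.log_pos (by linarith)
  have hm0 : 0 < m := hlogn.trans_le hαι
  set l := √(Real.log n / m) with hl
  have hl0 : 0 < l := by positivity
  have hlsq : l ^ 2 = Real.log n / m := Real.sq_sqrt (by positivity)
  have hml : m * l ^ 2 = Real.log n := by rw [hlsq]; field_simp
  have hupper : (Real.cosh l ^ Fintype.card ι) ^ 2 ≤ n := by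
    calc (Real.cosh l ^ Fintype.card ι) ^ 2
        ≤ (Real.exp (l ^ 2 / 2) ^ Fintype.card ι) ^ 2 := by
          gcongr
          exact Real.cosh_le_exp_half_sq l
      _ = Real.exp (Real.log n) := by
          rw [← Real.exp_nat_mul, ← Real.exp_nat_mul, ← hm, ← hml]
          push_cast
          ring_nf
      _ = n := Real.exp_log (by linarith)
  have hlower : m * (l ^ 2 / 3) ≤ m * Real.log (Real.cosh l) := by
    gcongr
    refine sq_div_three_le_log_cosh ?_
    rwa [hlsq, div_le_one hm0]
  have hmain := log_cosh_le_mul_expect_iSup_correlation hbal hcorr hl0.le hupper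
  have hsqrt : l * √(m * Real.log n) = Real.log n := by
    rw [hl, ← Real.sqrt_mul (by positivity), div_mul_eq_mul_div, mul_comm m, ← mul_assoc,
      mul_div_cancel_right₀ _ hm0.ne', Real.sqrt_mul_self hlogn.le]
  refine le_of_mul_le_mul_left ?_ hl0
  linarith

section SimplexCode

variable {k : ℕ}

lemma bdot_comm (a b : Fin k → Bool) : bdot a b = bdot b a := by
  simp only [bdot, Bool.and_comm]

lemma boolSign_bdot (a b : Fin k → Bool) : boolSign (bdot a b) = ∏ t, boolSign (a t && b t) := by
  have hprod : ∏ t, boolSign (a t && b t) = (-1) ^ #{t | a t && b t} := by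
    simp [boolSign, Finset.prod_ite]
  rw [hprod, bdot, boolSign]
  rcases Nat.even_or_odd #{t | a t && b t} with h | h
  · rw [h.neg_one_pow, Nat.even_iff.1 h]
    simp
  · rw [h.neg_one_pow, Nat.odd_iff.1 h]
    simp

lemma bdot_bot_right (a : Fin k → Bool) : bdot a ⊥ = false := by
  simp [bdot]

lemma expect_boolSign_bdot_mul (a b : Fin k → Bool) :
    𝔼 j, boolSign (bdot a j) * boolSign (bdot b j) = if a = b then 1 else 0 := by
  simp only [boolSign_bdot, ← Finset.prod_mul_distrib]
  rw [← prod_expect fun t c => boolSign (a t && c) * boolSign (b t && c)]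
  split_ifs with hab
  · subst hab
    simp [boolSign_mul_self]
  · obtain ⟨t, ht⟩ := Function.ne_iff.1 hab
    refine Finset.prod_eq_zero (Finset.mem_univ t) ?_
    rw [expect_bool]
    revert ht
    cases a t <;> cases b t <;> simp [boolSign]

/-- The simplex code, that is, the Hadamard code `a ↦ (a · j)_j` punctured at `j = 0`. The zero
vector of `{0,1}^k` is written `⊥`. -/
def simplexCode (a : Fin k → Bool) : {j : Fin k → Bool // j ≠ ⊥} → Bool := fun j => bdot a j

lemma expect_boolSign_simplexCode (j : {j : Fin k → Bool // j ≠ ⊥}) :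
    𝔼 a, boolSign (simplexCode a j) = 0 := by
  have h := expect_boolSign_bdot_mul j.1 ⊥
  simp only [bdot_comm j.1, bdot_comm ⊥, bdot_bot_right, boolSign_false, mul_one, if_neg j.2] at h
  exact h

lemma pairwise_correlation_simplexCode_nonpos :
    Pairwise fun a b : Fin k → Bool => correlation (simplexCode a) (simplexCode b) ≤ 0 := by
  intro a b hab
  have hsum : ∑ j, boolSign (bdot a j) * boolSign (bdot b j) = 0 := by
    simpa [Fintype.expect_eq_sum_div_card, hab] using expect_boolSign_bdot_mul a b
  rw [Fintype.sum_eq_add_sum_subtype_ne _ ⊥] at hsum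
  simp only [bdot_bot_right, boolSign_mul_self] at hsum
  simp only [correlation, simplexCode]
  linarith

lemma cast_card_subtype_ne_bot : (Fintype.card {j : Fin k → Bool // j ≠ ⊥} : ℝ) = 2 ^ k - 1 := by
  rw [Fintype.card_subtype_compl, Fintype.card_subtype_eq, Nat.cast_sub Fintype.card_pos]
  simp

end SimplexCode

section RelativeTo

variable {ι : Type*}

/-- The parities `x z ⊕ x j` of a word `x` along the pairs `(z, j)` with `j ≠ z`. -/
def relativeTo (z : ι) (x : ι → Bool) : {j // j ≠ z} → Bool := fun j => xor (x z) (x j)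

lemma expect_relativeTo [Fintype ι] [DecidableEq ι] {N : Type*} [AddCommMonoid N]
    [Module ℚ≥0 N] (z : ι) (f : ({j // j ≠ z} → Bool) → N) :
    𝔼 x, f (relativeTo z x) = 𝔼 y, f y := by
  have hxor : ∀ b : Bool, 𝔼 y : {j // j ≠ z} → Bool, f (fun j => xor b (y j)) = 𝔼 y, f y := by
    intro b
    have hinv : Function.Involutive fun (y : {j // j ≠ z} → Bool) j => xor b (y j) := fun y => by
      simp
    exact Fintype.expect_equiv hinv.toPerm _ _ fun _ => rfl
  calc 𝔼 x, f (relativeTo z x)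
      = 𝔼 p : Bool × ({j // j ≠ z} → Bool), f (fun j => xor p.1 (p.2 j)) :=
        Fintype.expect_equiv (Equiv.funSplitAt z Bool) _ _ fun _ => rfl
    _ = 𝔼 b, 𝔼 y : {j // j ≠ z} → Bool, f (fun j => xor b (y j)) := by
        rw [← Finset.univ_product_univ, Finset.expect_product]
    _ = 𝔼 y, f y := by simp [hxor]

end RelativeTo

section Matching

variable {k : ℕ}

lemma nonempty_matchingV (hk : 0 < k) : Nonempty (MatchingV k) := by
  refine ⟨⟨fun v => Function.update v ⟨0, hk⟩ !(v ⟨0, hk⟩), fun v => by simp, fun v hv => ?_⟩⟩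
  simpa using congrFun hv ⟨0, hk⟩

/-- Relabelling the vertices of a matching by a permutation. -/
def MatchingV.conj (σ : Equiv.Perm (Fin k → Bool)) (M : MatchingV k) : MatchingV k :=
  ⟨fun v => σ (M.1 (σ.symm v)), fun v => by simp [M.2.1], fun v hv =>
    M.2.2 (σ.symm v) (σ.injective (by simpa using hv))⟩

lemma MatchingV.conj_injective (σ : Equiv.Perm (Fin k → Bool)) :
    Function.Injective (MatchingV.conj σ) := by
  intro M N h
  refine Subtype.ext (funext fun v => σ.injective ?_)
  simpa [MatchingV.conj] using congrFun (congrArg Subtype.val h) (σ v)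

/-- The partner of `z`. -/
def MatchingV.partner (z : Fin k → Bool) (M : MatchingV k) : {j : Fin k → Bool // j ≠ z} :=
  ⟨M.1 z, M.2.2 z⟩

lemma card_partner_eq_le (z : Fin k → Bool) (i j : {j : Fin k → Bool // j ≠ z}) :
    #{M : MatchingV k | M.partner z = i} ≤ #{M : MatchingV k | M.partner z = j} := by
  refine Finset.card_le_card_of_injOn (MatchingV.conj (Equiv.swap i.1 j.1)) ?_
    (MatchingV.conj_injective _).injOn
  intro M hM
  have hMi : M.1 z = i := by simpa [MatchingV.partner, Subtype.ext_iff] using hM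
  have hz : (Equiv.swap i.1 j.1) z = z := Equiv.swap_apply_of_ne_of_ne i.2.symm j.2.symm
  rw [Finset.mem_coe, Finset.mem_filter_univ]
  refine Subtype.ext ?_
  simp [MatchingV.partner, MatchingV.conj, hz, hMi]

lemma expect_partner [Nonempty (MatchingV k)] {K : Type*} [Semifield K] [CharZero K]
    (z : Fin k → Bool) (f : {j : Fin k → Bool // j ≠ z} → K) :
    𝔼 M : MatchingV k, f (M.partner z) = 𝔼 j, f j := by
  obtain ⟨M₀⟩ := ‹Nonempty (MatchingV k)›
  exact expect_comp_of_card_fiber_eq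
    (fun j => (card_partner_eq_le z j (M₀.partner z)).antisymm (card_partner_eq_le z _ j)) f

lemma expect_win_eq [Nonempty (MatchingV k)] (a : Fin k → Bool) (x : (Fin k → Bool) → Bool) :
    (𝔼 M : MatchingV k, if xor (bdot a (bxor ⊥ (M.1 ⊥))) false = xor (x ⊥) (x (M.1 ⊥))
      then (1 : ℝ) else 0) =
      1 / 2 + correlation (simplexCode a) (relativeTo ⊥ x) / (2 * (2 ^ k - 1)) := by
  have hbxor : ∀ v : Fin k → Bool, bxor ⊥ v = v := fun v => by simp [funext_iff, bxor]
  calc (𝔼 M : MatchingV k, if xor (bdot a (bxor ⊥ (M.1 ⊥))) false = xor (x ⊥) (x (M.1 ⊥))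
        then (1 : ℝ) else 0)
      = 𝔼 M : MatchingV k, (1 + boolSign (simplexCode a (M.partner ⊥)) *
          boolSign (relativeTo ⊥ x (M.partner ⊥))) / 2 := by
        simp only [hbxor, Bool.xor_false, ite_eq_one_zero_eq_boolSign]
        rfl
    _ = (𝔼 _M : MatchingV k, (1 : ℝ)) / 2 + (𝔼 j, boolSign (simplexCode a j) *
          boolSign (relativeTo ⊥ x j)) / 2 := by
        rw [← Finset.expect_div, Finset.expect_add_distrib, add_div,
          expect_partner ⊥ fun j => boolSign (simplexCode a j) * boolSign (relativeTo ⊥ x j)]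
    _ = 1 / 2 + correlation (simplexCode a) (relativeTo ⊥ x) / (2 * (2 ^ k - 1)) := by
        rw [Fintype.expect_one, Fintype.expect_eq_sum_div_card, cast_card_subtype_ne_bot,
          div_div, mul_comm 2]
        rfl

lemma sum_sum_div_eq_expect (f : ((Fin k → Bool) → Bool) → MatchingV k → ℝ) :
    (∑ x, ∑ M, f x M) / ((2 : ℝ) ^ (2 ^ k) * Fintype.card (MatchingV k)) = 𝔼 x, 𝔼 M, f x M := by
  simp [Fintype.expect_eq_sum_div_card, ← Finset.sum_div, div_div, mul_comm]

end Matching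

lemma sqrt_log_div_le_expect_iSup_correlation_simplexCode {k : ℕ} (hk : 64 ≤ 2 ^ k) :
    1 / 96 * √(Real.log (2 ^ k) / 2 ^ k) ≤
      (𝔼 y, ⨆ a : Fin k → Bool, correlation (simplexCode a) y) / (2 * (2 ^ k - 1)) := by
  have hn : (64 : ℝ) ≤ 2 ^ k := by exact_mod_cast hk
  have hm : (0 : ℝ) < 2 ^ k - 1 := by linarith
  have hlog : 0 ≤ Real.log (2 ^ k) := Real.log_nonneg (by linarith)
  have hmax := sqrt_card_mul_log_card_le_expect_iSup_correlation (u := simplexCode (k := k))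
    expect_boolSign_simplexCode pairwise_correlation_simplexCode_nonpos (by simpa using hk)
    (by simpa [cast_card_subtype_ne_bot] using
      Real.log_le_sub_one_of_pos (x := 2 ^ k) (by positivity))
  rw [cast_card_subtype_ne_bot, show (Fintype.card (Fin k → Bool) : ℝ) = 2 ^ k by simp] at hmax
  rw [le_div_iff₀ (by positivity)]
  calc 1 / 96 * √(Real.log (2 ^ k) / 2 ^ k) * (2 * (2 ^ k - 1))
      ≤ 1 / 96 * √(Real.log (2 ^ k) / (2 ^ k - 1)) * (2 * (2 ^ k - 1)) := by
        gcongr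
        linarith
    _ = √((2 ^ k - 1) * Real.log (2 ^ k)) / 48 := by
        rw [Real.sqrt_div hlog, Real.sqrt_mul hm.le]
        field_simp
        rw [Real.sq_sqrt hm.le]
        ring
    _ ≤ 𝔼 y, ⨆ a : Fin k → Bool, correlation (simplexCode a) y := hmax

/-- There are constants `K > 0` and `n₀` such that for every `n = 2^k`
with `n ≥ n₀` there is a deterministic strategy for the non-local Hidden Matching
game whose winning probability over uniform inputs `x, M` is at least
`1/2 + K·√((log n)/n)`. -/
theorem hidden_matching_nonlocal_classical_strategy :
    ∃ K : ℝ, 0 < K ∧ ∃ n₀ : ℕ,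
      ∀ k : ℕ, n₀ ≤ 2 ^ k →
      ∃ (A : ((Fin k → Bool) → Bool) → (Fin k → Bool))
        (Bob : MatchingV k → (Fin k → Bool) × Bool),
        1 / 2 + K * Real.sqrt (Real.log (2 ^ k) / (2 ^ k)) ≤
          (∑ x : (Fin k → Bool) → Bool, ∑ M : MatchingV k,
              if xor (bdot (A x) (bxor (Bob M).1 (M.1 (Bob M).1))) (Bob M).2
                  = xor (x (Bob M).1) (x (M.1 (Bob M).1))
              then (1 : ℝ) else 0)
            / ((2 : ℝ) ^ (2 ^ k) * (Fintype.card (MatchingV k))) := by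
  refine ⟨1 / 96, by norm_num, 64, fun k hk => ?_⟩
  have : Nonempty (MatchingV k) :=
    nonempty_matchingV (Nat.pos_of_ne_zero (by rintro rfl; simp at hk))
  choose decode hdecode using fun y => exists_eq_ciSup_of_finite
    (f := fun a : Fin k → Bool => correlation (simplexCode a) y)
  refine ⟨fun x => decode (relativeTo ⊥ x), fun _ => (⊥, false), ?_⟩
  rw [sum_sum_div_eq_expect]
  calc 1 / 2 + 1 / 96 * √(Real.log (2 ^ k) / 2 ^ k)
      ≤ 1 / 2 + (𝔼 y, correlation (simplexCode (decode y)) y) / (2 * (2 ^ k - 1)) := by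
        simp only [hdecode]
        gcongr
        exact sqrt_log_div_le_expect_iSup_correlation_simplexCode hk
    _ = 1 / 2 + (𝔼 x, correlation (simplexCode (decode (relativeTo ⊥ x))) (relativeTo ⊥ x)) /
          (2 * (2 ^ k - 1)) := by
        rw [expect_relativeTo ⊥ fun y => correlation (simplexCode (decode y)) y]
    _ = 𝔼 x, (1 / 2 + correlation (simplexCode (decode (relativeTo ⊥ x))) (relativeTo ⊥ x) /
          (2 * (2 ^ k - 1))) := by
        rw [Finset.expect_add_distrib, Fintype.expect_const, Finset.expect_div]
    _ = _ := by simp only [expect_win_eq]
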